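/- Let E be an ordered Polish space and P a monotone Markov kernel on E. Suppose that for any x, y ∈ E there exist Borel sets A_{x,y} and B_{x,y} with A_{x,y} ⪯ B_{x,y} such that the hitting times τˣ = inf{n ≥ 0 : Xₙˣ ∈ A_{x,y}} and τʸ = inf{n ≥ 0 : Xₙʸ ∈ B_{x,y}} are both finite almost surely. Then P possesses at most one stationary distribution. -/

import Mathlib

/-!
Fix a Borel upper set `J` and let `u n` be the Cesàro mean of the functions `x ↦ (P ^ k) x J` over
`k ≤ n`. Each `u n` is monotone, has integral `π J` against every stationary `π`, and differs from
`P (u n)` by at most `1 / (n + 1)`. Let `c n` be the supremum of `u n` on `A`, so that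
`u n ≤ c n` on `A` and `c n ≤ u n` on `B`. Stopping the almost-martingale `u n (X k)` on reaching
`A` gives `(u n x - c n)⁺ → 0`, and on reaching `B` gives `(c n - u n y)⁺ → 0`. Hence
`(u n x - u n y)⁺ → 0` for all `x` and `y`, and dominated convergence under `π₁ ⊗ π₂` yields
`π₁ J ≤ π₂ J`. Exchanging the roles of `π₁` and `π₂`, the two measures agree on Borel upper sets.
These generate the Borel σ-algebra: by an iterated Luzin separation, countably many of them separate
the points of `E`, and on a standard Borel space this is enough.
-/

open MeasureTheory ProbabilityTheory Filter Topology

/-- `μ` is *stochastically smaller* than `ν` (written `μ ⪯ ν` in the paper):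
`μ I ≤ ν I` for every Borel increasing (upper) set `I`. -/
def StochDom {E : Type*} [MeasurableSpace E] [Preorder E] (μ ν : Measure E) : Prop :=
  ∀ I : Set E, MeasurableSet I → IsUpperSet I → μ I ≤ ν I

/-- A Markov kernel `P` is *(stochastically) monotone* if for every bounded monotone
measurable `g : E → [0,1]` the map `x ↦ ∫ g dP(x)` is again monotone. -/
def MonotoneKernel {E : Type*} [MeasurableSpace E] [Preorder E] (P : Kernel E E) : Prop :=
  ∀ g : E → ℝ, Measurable g → Monotone g → (∀ x, g x ∈ Set.Icc (0 : ℝ) 1) →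
    Monotone fun x => ∫ y, g y ∂(P x)

/-- The `n`-step transition kernel `P⁽ⁿ⁾` of a Markov kernel `P`;
`kpow P n x` is the law of `Xₙˣ`, the chain with kernel `P` started at `x`. -/
noncomputable def kpow {E : Type*} [MeasurableSpace E] (P : Kernel E E) : ℕ → Kernel E E
  | 0 => Kernel.id
  | n + 1 => P.comp (kpow P n)

/-- The process `Z` on `(Ω, μ)` is a (possibly time-inhomogeneous) Markov chain with
one-step kernels `Q n`, expressed through finite-dimensional distributions: for every
bounded measurable cylinder functional `φ` of the past and every Borel set `A`,
`E[φ(Z₀,…,Zₙ) · 1_A(Z_{n+1})] = E[φ(Z₀,…,Zₙ) · (Q n)(Zₙ, A)]`. -/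
def MCStep {Ω S : Type*} [MeasurableSpace Ω] [MeasurableSpace S]
    (μ : Measure Ω) (Q : ℕ → Kernel S S) (Z : ℕ → Ω → S) : Prop :=
  ∀ (n : ℕ) (A : Set S), MeasurableSet A →
    ∀ φ : (Fin (n + 1) → S) → ℝ, Measurable φ → (∀ v, φ v ∈ Set.Icc (0 : ℝ) 1) →
      ∫ ω, φ (fun i => Z i.1 ω) * A.indicator (fun _ => (1 : ℝ)) (Z (n + 1) ω) ∂μ
        = ∫ ω, φ (fun i => Z i.1 ω) * ((Q n) (Z n ω) A).toReal ∂μ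

/-- `X` on `(Ω, μ)` is a time-homogeneous Markov chain with kernel `P` started at `x`. -/
def IsMChain {E Ω : Type*} [MeasurableSpace E] [MeasurableSpace Ω]
    (P : Kernel E E) (x : E) (μ : Measure Ω) (X : ℕ → Ω → E) : Prop :=
  IsProbabilityMeasure μ ∧ (∀ n, Measurable (X n)) ∧ (∀ᵐ ω ∂μ, X 0 ω = x) ∧
    MCStep μ (fun _ => P) X

/-- A *Markovian coupling* of two chains with kernel `P` started at `x` and `y`:
both coordinates are Markov chains with kernel `P` and the pair process is itself a
(possibly time-inhomogeneous) Markov chain. -/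
def IsMarkovianCoupling {E Ω : Type*} [MeasurableSpace E] [MeasurableSpace Ω]
    (P : Kernel E E) (x y : E) (μ : Measure Ω) (X Y : ℕ → Ω → E) : Prop :=
  IsMChain P x μ X ∧ IsMChain P y μ Y ∧
    ∃ Q : ℕ → Kernel (E × E) (E × E), (∀ n, IsMarkovKernel (Q n)) ∧
      MCStep μ Q fun n ω => (X n ω, Y n ω)

/-- A set `H ⊆ E × E` is *achievable* for the kernel `P` if for all `x, y` there is a
Markovian coupling of the chains started at `x` and `y` whose hitting time of `H`
is finite almost surely. -/
def Achievable {E : Type*} [MeasurableSpace E] (P : Kernel E E) (H : Set (E × E)) : Prop :=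
  ∀ x y : E, ∃ (Ω : Type) (_ : MeasurableSpace Ω) (μ : Measure Ω) (X Y : ℕ → Ω → E),
    IsMarkovianCoupling P x y μ X Y ∧ ∀ᵐ ω ∂μ, ∃ n, (X n ω, Y n ω) ∈ H

/-- Condition (BMC): every increasing sequence bounded above by some element converges. -/
def BMC (E : Type*) [Preorder E] [TopologicalSpace E] : Prop :=
  ∀ (x : ℕ → E) (y : E), Monotone x → (∀ n, x n ≤ y) → ∃ l, Tendsto x atTop (nhds l)

/-- The ordered metric space `E` is *normal*: there is a continuous `h : [0,∞) → [0,∞)`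
with `h 0 = 0` such that `x ⪯ y ⪯ z` implies `d(x,y) ≤ h (d(x,z))`. -/
def NormalOrdered (E : Type*) [PseudoMetricSpace E] [Preorder E] : Prop :=
  ∃ h : ℝ → ℝ, ContinuousOn h (Set.Ici 0) ∧ h 0 = 0 ∧ (∀ t ≥ (0 : ℝ), 0 ≤ h t) ∧
    ∀ x y z : E, x ≤ y → y ≤ z → dist x y ≤ h (dist x z)

/-- Condition (PR): there are `x₀ ⪯ y₀` such that the hitting times
`ν⁻ = min {n ≥ 1 : Xₙ^{x₀} ⪰ x₀}` and `ν⁺ = min {n ≥ 1 : Xₙ^{y₀} ⪯ y₀}`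
have finite expectations. -/
def PRCond {E : Type*} [MeasurableSpace E] [Preorder E] (P : Kernel E E) : Prop :=
  ∃ x₀ y₀ : E, x₀ ≤ y₀ ∧
    (∃ (Ω : Type) (_ : MeasurableSpace Ω) (μ : Measure Ω) (X : ℕ → Ω → E),
      IsMChain P x₀ μ X ∧ (∀ᵐ ω ∂μ, ∃ n, 1 ≤ n ∧ x₀ ≤ X n ω) ∧
      Integrable (fun ω => ((sInf {n : ℕ | 1 ≤ n ∧ x₀ ≤ X n ω} : ℕ) : ℝ)) μ) ∧
    (∃ (Ω : Type) (_ : MeasurableSpace Ω) (μ : Measure Ω) (X : ℕ → Ω → E),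
      IsMChain P y₀ μ X ∧ (∀ᵐ ω ∂μ, ∃ n, 1 ≤ n ∧ X n ω ≤ y₀) ∧
      Integrable (fun ω => ((sInf {n : ℕ | 1 ≤ n ∧ X n ω ≤ y₀} : ℕ) : ℝ)) μ)

open scoped ENNReal

section UpperSets

variable {E : Type*} [TopologicalSpace E] [PolishSpace E] [Preorder E] [OrderClosedTopology E]

theorem analyticSet_upperClosure {C : Set E} (hC : AnalyticSet C) :
    AnalyticSet (upperClosure C : Set E) := by
  have h_order : AnalyticSet {p : E × E | p.1 ≤ p.2} :=
    (isClosed_le continuous_fst continuous_snd).analyticSet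
  have h_inter : AnalyticSet ({p : E × E | p.1 ≤ p.2} ∩ Prod.fst ⁻¹' C) := by
    rw [Set.inter_eq_iInter]
    exact .iInter (Bool.forall_bool.2 ⟨hC.preimage continuous_fst, h_order⟩)
  convert h_inter.image_of_continuous continuous_snd
  ext y
  simp [and_comm]

theorem analyticSet_lowerClosure {C : Set E} (hC : AnalyticSet C) :
    AnalyticSet (lowerClosure C : Set E) := by
  have : PolishSpace Eᵒᵈ := inferInstanceAs (PolishSpace E)
  exact analyticSet_upperClosure (E := Eᵒᵈ) hC

variable [MeasurableSpace E] [BorelSpace E]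

theorem exists_measurableSet_upperClosure_subset_disjoint {C L : Set E} (hC : AnalyticSet C)
    (hL : AnalyticSet L) (hL_lower : IsLowerSet L) (hCL : Disjoint C L) :
    ∃ D, MeasurableSet D ∧ ↑(upperClosure C) ⊆ D ∧ Disjoint D L := by
  have h_disj : Disjoint (upperClosure C : Set E) L :=
    Set.subset_compl_iff_disjoint_right.1 <|
      upperClosure_min (Set.subset_compl_iff_disjoint_right.2 hCL) hL_lower.compl
  obtain ⟨D, hCD, hDL, hD⟩ := (analyticSet_upperClosure hC).measurablySeparable hL h_disj
  exact ⟨D, hD, hCD, hDL.symm⟩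

theorem exists_measurableSet_isUpperSet_subset_disjoint {C L : Set E} (hC : AnalyticSet C)
    (hL : AnalyticSet L) (hL_lower : IsLowerSet L) (hCL : Disjoint C L) :
    ∃ J, MeasurableSet J ∧ IsUpperSet J ∧ C ⊆ J ∧ Disjoint J L := by
  have h_step (D : {D : Set E // AnalyticSet D ∧ Disjoint D L}) :
      ∃ D' : {D : Set E // AnalyticSet D ∧ Disjoint D L},
        MeasurableSet D'.1 ∧ ↑(upperClosure D.1) ⊆ D'.1 := by
    obtain ⟨D', hD', hDD', hD'L⟩ :=
      exists_measurableSet_upperClosure_subset_disjoint D.2.1 hL hL_lower D.2.2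
    exact ⟨⟨D', hD'.analyticSet, hD'L⟩, hD', hDD'⟩
  choose F hF_meas hF_subset using h_step
  -- A separator of `upperClosure C` and `L` need not be an upper set, but the union of the
  -- sequence in which each set contains the upper closure of the preceding one is.
  let S (n : ℕ) := F^[n] ⟨C, hC, hCL⟩
  have hS_succ (n : ℕ) : S (n + 1) = F (S n) := Function.iterate_succ_apply' F n _
  have hS_subset (n : ℕ) : ↑(upperClosure (S n).1) ⊆ (S (n + 1)).1 := hS_succ n ▸ hF_subset (S n)
  refine ⟨⋃ n, (S (n + 1)).1, .iUnion fun n => hS_succ n ▸ hF_meas (S n), ?_, ?_, ?_⟩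
  · intro a b hab ha
    obtain ⟨n, hn⟩ := Set.mem_iUnion.1 ha
    exact Set.mem_iUnion.2 ⟨n + 1, hS_subset (n + 1) ⟨a, hn, hab⟩⟩
  · exact subset_upperClosure.trans
      ((hS_subset 0).trans (Set.subset_iUnion (fun n => (S (n + 1)).1) 0))
  · exact Set.disjoint_iUnion_left.2 fun n => (S (n + 1)).2.2

end UpperSets

section Generation

variable {E : Type*}

theorem measurableSpace_eq_of_le_of_countablySeparated {m m' : MeasurableSpace E}
    [@StandardBorelSpace E m] [@MeasurableSpace.CountablySeparated E m'] (h : m' ≤ m) : m' = m := by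
  have h_map := @Measurable.map_measurableSpace_eq E E m _ m' _ id (measurable_id'' h)
    Function.surjective_id
  rwa [MeasurableSpace.map_id, eq_comm] at h_map

variable [TopologicalSpace E] [PolishSpace E] [MeasurableSpace E] [BorelSpace E] [PartialOrder E]
  [OrderClosedTopology E]

theorem hasCountableSeparatingOn_measurableSet_isUpperSet :
    HasCountableSeparatingOn E (fun J => MeasurableSet J ∧ IsUpperSet J) Set.univ := by
  let b := TopologicalSpace.countableBasis E
  have hb : TopologicalSpace.IsTopologicalBasis b := TopologicalSpace.isBasis_countableBasis E
  let pairs := {p : b × b // Disjoint p.1.1 ↑(lowerClosure p.2.1)}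
  have h_sep (p : pairs) : ∃ J, MeasurableSet J ∧ IsUpperSet J ∧ p.1.1.1 ⊆ J ∧
      Disjoint J ↑(lowerClosure p.1.2.1) :=
    exists_measurableSet_isUpperSet_subset_disjoint
      (hb.isOpen p.1.1.2).measurableSet.analyticSet
      (analyticSet_lowerClosure (hb.isOpen p.1.2.2).measurableSet.analyticSet)
      (lowerClosure p.1.2.1).lower p.2
  choose J hJ_meas hJ_upper hJ_subset hJ_disj using h_sep
  have h_le (x y : E) (hxy : ∀ s ∈ Set.range J, x ∈ s → y ∈ s) : x ≤ y := by
    by_contra hn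
    have h_open : IsOpen {p : E × E | ¬ p.1 ≤ p.2} :=
      (isClosed_le continuous_fst continuous_snd).isOpen_compl
    obtain ⟨_, ⟨U, hU, V, hV, rfl⟩, ⟨hxU, hyV⟩, hUV⟩ :=
      (hb.prod hb).exists_subset_of_mem_open (show (x, y) ∈ _ from hn) h_open
    have h_disj : Disjoint U ↑(lowerClosure V) := Set.disjoint_left.2 fun u hu ⟨v, hv, huv⟩ =>
      hUV (Set.mk_mem_prod hu hv) huv
    let p : pairs := ⟨(⟨U, hU⟩, ⟨V, hV⟩), h_disj⟩
    exact Set.disjoint_left.1 (hJ_disj p) (hxy _ ⟨p, rfl⟩ (hJ_subset p hxU))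
      (subset_lowerClosure hyV)
  refine ⟨Set.range J, Set.countable_range J, Set.forall_mem_range.2 fun p =>
    ⟨hJ_meas p, hJ_upper p⟩, fun x _ y _ hxy => le_antisymm ?_ ?_⟩
  · exact h_le x y fun s hs => (hxy s hs).1
  · exact h_le y x fun s hs => (hxy s hs).2

theorem generateFrom_measurableSet_isUpperSet :
    MeasurableSpace.generateFrom {J : Set E | MeasurableSet J ∧ IsUpperSet J} =
      ‹MeasurableSpace E› := by
  have h_sep : @MeasurableSpace.CountablySeparated E
      (.generateFrom {J : Set E | MeasurableSet J ∧ IsUpperSet J}) :=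
    @MeasurableSpace.CountablySeparated.mk E (_) <|
      hasCountableSeparatingOn_measurableSet_isUpperSet.mono
        (fun _ hJ => MeasurableSpace.measurableSet_generateFrom hJ) subset_rfl
  exact measurableSpace_eq_of_le_of_countablySeparated
    (MeasurableSpace.generateFrom_le fun _ hJ => hJ.1)

theorem StochDom.antisymm {μ ν : Measure E} [IsFiniteMeasure μ] (hμν : StochDom μ ν)
    (hνμ : StochDom ν μ) : μ = ν := by
  have h_eq (J : Set E) (hJ : MeasurableSet J ∧ IsUpperSet J) : μ J = ν J :=
    (hμν J hJ.1 hJ.2).antisymm (hνμ J hJ.1 hJ.2)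
  refine ext_of_generate_finite _ generateFrom_measurableSet_isUpperSet.symm ?_ h_eq
    (h_eq _ ⟨.univ, isUpperSet_univ⟩)
  exact fun s hs t ht _ => ⟨hs.1.inter ht.1, hs.2.inter ht.2⟩

end Generation

section AvoidUpTo

variable {E Ω : Type*} {X : ℕ → Ω → E} {A : Set E}

/-- The event that the process `X` does not visit `A` up to and including time `n`; in terms of the
hitting time `τ` of `A` this is `{τ > n}`. -/
def avoidUpTo (X : ℕ → Ω → E) (A : Set E) (n : ℕ) : Set Ω :=
  {ω | ∀ i ≤ n, X i ω ∉ A}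

theorem avoidUpTo_zero : avoidUpTo X A 0 = X 0 ⁻¹' Aᶜ := by
  ext ω
  simp [avoidUpTo]

theorem avoidUpTo_succ (n : ℕ) :
    avoidUpTo X A (n + 1) = X (n + 1) ⁻¹' Aᶜ ∩ avoidUpTo X A n := by
  ext ω
  simp [avoidUpTo, Nat.le_succ_iff, or_imp, forall_and, and_comm]

theorem antitone_avoidUpTo : Antitone (avoidUpTo X A) :=
  fun _ _ hmn _ hω i hi => hω i (hi.trans hmn)

theorem iInter_avoidUpTo : ⋂ n, avoidUpTo X A n = {ω | ∃ n, X n ω ∈ A}ᶜ := by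
  ext ω
  simpa [avoidUpTo] using ⟨fun h n => h n n le_rfl, fun h _ i _ => h i⟩

theorem avoidUpTo_eq_preimage_pi (n : ℕ) :
    avoidUpTo X A n = (fun ω (i : Fin (n + 1)) => X i ω) ⁻¹' Set.univ.pi fun _ => Aᶜ := by
  ext ω
  simp [avoidUpTo, Fin.forall_iff]

variable [MeasurableSpace Ω] {μ : Measure Ω}

theorem setLIntegral_avoidUpTo_zero {w : E → ℝ≥0∞} (hwA : Set.EqOn w 0 A) :
    ∫⁻ ω in avoidUpTo X A 0, w (X 0 ω) ∂μ = ∫⁻ ω, w (X 0 ω) ∂μ := by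
  rw [avoidUpTo_zero]
  exact setLIntegral_eq_of_support_subset fun ω hω hA => hω (hwA hA)

variable [MeasurableSpace E]

theorem measurableSet_avoidUpTo (hX : ∀ n, Measurable (X n)) (hA : MeasurableSet A) (n : ℕ) :
    MeasurableSet (avoidUpTo X A n) := by
  rw [avoidUpTo_eq_preimage_pi]
  exact measurable_pi_lambda _ (fun i : Fin (n + 1) => hX i) (.univ_pi fun _ => hA.compl)

theorem tendsto_measure_avoidUpTo [IsFiniteMeasure μ] (hX : ∀ n, Measurable (X n))
    (hA : MeasurableSet A) (h_hit : ∀ᵐ ω ∂μ, ∃ n, X n ω ∈ A) :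
    Tendsto (fun n => μ (avoidUpTo X A n)) atTop (𝓝 0) := by
  have h_zero : μ (⋂ n, avoidUpTo X A n) = 0 := by
    rw [iInter_avoidUpTo]
    exact mem_ae_iff.1 h_hit
  rw [← h_zero]
  exact tendsto_measure_iInter_atTop
    (fun n => (measurableSet_avoidUpTo hX hA n).nullMeasurableSet) antitone_avoidUpTo
    ⟨0, measure_ne_top _ _⟩

theorem setLIntegral_avoidUpTo_succ {w : E → ℝ≥0∞} (hX : ∀ n, Measurable (X n))
    (hA : MeasurableSet A) (hwA : Set.EqOn w 0 A) (n : ℕ) :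
    ∫⁻ ω in avoidUpTo X A (n + 1), w (X (n + 1) ω) ∂μ =
      ∫⁻ ω in avoidUpTo X A n, w (X (n + 1) ω) ∂μ := by
  rw [avoidUpTo_succ, ← Measure.restrict_restrict (hX (n + 1) hA.compl)]
  exact setLIntegral_eq_of_support_subset fun ω hω hA => hω (hwA hA)

end AvoidUpTo

section MarkovChain

variable {E Ω : Type*} [MeasurableSpace E] [MeasurableSpace Ω] {μ : Measure Ω}

theorem MCStep.measureReal_preimage_inter {Q : ℕ → Kernel E E} {Z : ℕ → Ω → E}
    (hZ : ∀ n, Measurable (Z n)) (h : MCStep μ Q Z) (n : ℕ) {T : Set (Fin (n + 1) → E)}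
    (hT : MeasurableSet T) {A : Set E} (hA : MeasurableSet A) :
    μ.real (Z (n + 1) ⁻¹' A ∩ (fun ω (i : Fin (n + 1)) => Z i ω) ⁻¹' T) =
      ∫ ω in (fun ω (i : Fin (n + 1)) => Z i ω) ⁻¹' T, (Q n (Z n ω)).real A ∂μ := by
  set past : Ω → Fin (n + 1) → E := fun ω i => Z i ω
  have h_past : MeasurableSet (past ⁻¹' T) := measurable_pi_lambda past (fun i => hZ i) hT
  calc μ.real (Z (n + 1) ⁻¹' A ∩ past ⁻¹' T)
      = ∫ ω, (Z (n + 1) ⁻¹' A ∩ past ⁻¹' T).indicator 1 ω ∂μ :=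
        (integral_indicator_one ((hZ _ hA).inter h_past)).symm
    _ = ∫ ω, T.indicator (fun _ => (1 : ℝ)) (past ω) *
          A.indicator (fun _ => (1 : ℝ)) (Z (n + 1) ω) ∂μ := by
        congr with ω
        by_cases hω : past ω ∈ T <;> by_cases hω' : Z (n + 1) ω ∈ A <;> simp [hω, hω']
    _ = ∫ ω, T.indicator (fun _ => (1 : ℝ)) (past ω) * (Q n (Z n ω)).real A ∂μ :=
        h n A hA _ (measurable_const.indicator hT) fun v => by
          by_cases hv : v ∈ T <;> simp [hv]
    _ = ∫ ω in past ⁻¹' T, (Q n (Z n ω)).real A ∂μ := by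
        rw [← integral_indicator h_past]
        congr with ω
        by_cases hω : past ω ∈ T <;> simp [hω]

theorem MCStep.map_restrict_eq_bind [IsFiniteMeasure μ] {Q : ℕ → Kernel E E}
    [∀ n, IsFiniteKernel (Q n)] {Z : ℕ → Ω → E} (hZ : ∀ n, Measurable (Z n)) (h : MCStep μ Q Z)
    (n : ℕ) {T : Set (Fin (n + 1) → E)} (hT : MeasurableSet T) :
    (μ.restrict ((fun ω (i : Fin (n + 1)) => Z i ω) ⁻¹' T)).map (Z (n + 1)) =
      ((μ.restrict ((fun ω (i : Fin (n + 1)) => Z i ω) ⁻¹' T)).map (Z n)).bind (Q n) := by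
  set past : Ω → Fin (n + 1) → E := fun ω i => Z i ω
  have := Measure.isFiniteMeasure_map (μ.restrict (past ⁻¹' T)) (Z n)
  ext A hA
  have h_meas : Measurable fun ω => Q n (Z n ω) A := (Kernel.measurable_coe _ hA).comp (hZ n)
  rw [← measureReal_eq_measureReal_iff]
  calc ((μ.restrict (past ⁻¹' T)).map (Z (n + 1))).real A
      = μ.real (Z (n + 1) ⁻¹' A ∩ past ⁻¹' T) := by
        rw [map_measureReal_apply (hZ _) hA, measureReal_restrict_apply (hZ _ hA)]
    _ = ∫ ω in past ⁻¹' T, (Q n (Z n ω)).real A ∂μ := h.measureReal_preimage_inter hZ n hT hA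
    _ = (∫⁻ ω in past ⁻¹' T, Q n (Z n ω) A ∂μ).toReal :=
        integral_toReal h_meas.aemeasurable (ae_of_all _ fun _ => measure_lt_top _ _)
    _ = (((μ.restrict (past ⁻¹' T)).map (Z n)).bind (Q n)).real A := by
        rw [Measure.real, Measure.bind_apply hA (Kernel.aemeasurable _),
          lintegral_map (Kernel.measurable_coe _ hA) (hZ n)]

theorem MCStep.setLIntegral_succ [IsFiniteMeasure μ] {Q : ℕ → Kernel E E}
    [∀ n, IsFiniteKernel (Q n)] {Z : ℕ → Ω → E} (hZ : ∀ n, Measurable (Z n)) (h : MCStep μ Q Z)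
    (n : ℕ) {T : Set (Fin (n + 1) → E)} (hT : MeasurableSet T) {f : E → ℝ≥0∞}
    (hf : Measurable f) :
    ∫⁻ ω in (fun ω (i : Fin (n + 1)) => Z i ω) ⁻¹' T, f (Z (n + 1) ω) ∂μ =
      ∫⁻ ω in (fun ω (i : Fin (n + 1)) => Z i ω) ⁻¹' T, ∫⁻ y, f y ∂Q n (Z n ω) ∂μ := by
  rw [← lintegral_map hf (hZ _), h.map_restrict_eq_bind hZ n hT,
    Measure.lintegral_bind (Kernel.aemeasurable _) hf.aemeasurable,
    lintegral_map hf.lintegral_kernel (hZ n)]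

/-- Optional stopping at the hitting time of `A`: since `w` vanishes on `A`, only the event that `A`
has not been reached yet contributes. -/
theorem IsMChain.le_setLIntegral_avoidUpTo {P : Kernel E E} [IsFiniteKernel P] {x : E}
    {X : ℕ → Ω → E} (hX : IsMChain P x μ X) {A : Set E} (hA : MeasurableSet A) {w : E → ℝ≥0∞}
    (hw : Measurable w) (hwA : Set.EqOn w 0 A) {δ : ℝ≥0∞}
    (h_sub : ∀ z, w z ≤ ∫⁻ y, w y ∂P z + δ) (n : ℕ) :
    w x ≤ ∫⁻ ω in avoidUpTo X A n, w (X n ω) ∂μ + n * δ := by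
  obtain ⟨_, hX_meas, hX_zero, hX_step⟩ := hX
  induction n with
  | zero =>
    have h_start : ∫⁻ ω, w (X 0 ω) ∂μ = ∫⁻ _, w x ∂μ :=
      lintegral_congr_ae (EventuallyEq.fun_comp hX_zero w)
    simp [setLIntegral_avoidUpTo_zero hwA, h_start]
  | succ n ih =>
    have h_next : ∫⁻ ω in avoidUpTo X A n, ∫⁻ y, w y ∂P (X n ω) ∂μ =
        ∫⁻ ω in avoidUpTo X A n, w (X (n + 1) ω) ∂μ := by
      rw [avoidUpTo_eq_preimage_pi]
      exact (hX_step.setLIntegral_succ hX_meas n (.univ_pi fun _ => hA.compl) hw).symm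
    have h_error : ∫⁻ _ in avoidUpTo X A n, δ ∂μ ≤ δ := by
      rw [setLIntegral_const]
      exact mul_le_of_le_one_right' prob_le_one
    calc w x ≤ ∫⁻ ω in avoidUpTo X A n, w (X n ω) ∂μ + n * δ := ih
      _ ≤ ∫⁻ ω in avoidUpTo X A n, (∫⁻ y, w y ∂P (X n ω) + δ) ∂μ + n * δ := by
        gcongr
        exact h_sub _
      _ = ∫⁻ ω in avoidUpTo X A n, ∫⁻ y, w y ∂P (X n ω) ∂μ +
            ∫⁻ _ in avoidUpTo X A n, δ ∂μ + n * δ := by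
        rw [lintegral_add_right _ measurable_const]
      _ ≤ ∫⁻ ω in avoidUpTo X A n, w (X (n + 1) ω) ∂μ + δ + n * δ := by
        rw [h_next]
        gcongr
      _ = ∫⁻ ω in avoidUpTo X A (n + 1), w (X (n + 1) ω) ∂μ + (n + 1 : ℕ) * δ := by
        rw [setLIntegral_avoidUpTo_succ hX_meas hA hwA]
        push_cast
        ring

/-- Some chain with kernel `P` started at `x` has an almost surely finite hitting time of `A`. The
law of the chain is determined by `P` and `x`, so the choice of the chain is immaterial. -/
def HitsAlmostSurely (P : Kernel E E) (x : E) (A : Set E) : Prop :=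
  ∃ (Ω : Type) (_ : MeasurableSpace Ω) (μ : Measure Ω) (X : ℕ → Ω → E),
    IsMChain P x μ X ∧ ∀ᵐ ω ∂μ, ∃ n, X n ω ∈ A

theorem HitsAlmostSurely.tendsto_zero {P : Kernel E E} [IsFiniteKernel P] {x : E} {A : Set E}
    (h : HitsAlmostSurely P x A) (hA : MeasurableSet A) {w : ℕ → E → ℝ≥0∞}
    (hw : ∀ n, Measurable (w n)) (hw_le_one : ∀ n z, w n z ≤ 1) (hwA : ∀ n, Set.EqOn (w n) 0 A)
    {δ : ℕ → ℝ≥0∞} (hδ : Tendsto δ atTop (𝓝 0))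
    (h_sub : ∀ n z, w n z ≤ ∫⁻ y, w n y ∂P z + δ n) :
    Tendsto (fun n => w n x) atTop (𝓝 0) := by
  obtain ⟨Ω, _, μ, X, hX, h_hit⟩ := h
  have := hX.1
  have h_bound (m n : ℕ) : w n x ≤ μ (avoidUpTo X A m) + m * δ n := calc
    w n x ≤ ∫⁻ ω in avoidUpTo X A m, w n (X m ω) ∂μ + m * δ n :=
      hX.le_setLIntegral_avoidUpTo hA (hw n) (hwA n) (h_sub n) m
    _ ≤ ∫⁻ _ in avoidUpTo X A m, 1 ∂μ + m * δ n := by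
      gcongr
      exact hw_le_one n _
    _ = μ (avoidUpTo X A m) + m * δ n := by rw [setLIntegral_one]
  rw [ENNReal.tendsto_nhds_zero]
  intro ε hε
  obtain ⟨m, hm⟩ := (ENNReal.tendsto_nhds_zero.1 (tendsto_measure_avoidUpTo hX.2.1 hA h_hit)
    (ε / 2) (ENNReal.half_pos hε.ne')).exists
  have h_mul : Tendsto (fun n => m * δ n) atTop (𝓝 0) := by
    simpa using ENNReal.Tendsto.const_mul hδ (Or.inr (ENNReal.natCast_ne_top m))
  filter_upwards [ENNReal.tendsto_nhds_zero.1 h_mul (ε / 2) (ENNReal.half_pos hε.ne')] with n hn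
  calc w n x ≤ μ (avoidUpTo X A m) + m * δ n := h_bound m n
    _ ≤ ε / 2 + ε / 2 := add_le_add hm hn
    _ = ε := ENNReal.add_halves ε

theorem HitsAlmostSurely.tendsto_sub [Preorder E] {P : Kernel E E} [IsMarkovKernel P] {x y : E}
    {A B : Set E} (hx : HitsAlmostSurely P x A) (hy : HitsAlmostSurely P y B)
    (hA : MeasurableSet A) (hB : MeasurableSet B) (hAB : ∀ a ∈ A, ∀ b ∈ B, a ≤ b)
    {u : ℕ → E → ℝ≥0∞} (hu : ∀ n, Measurable (u n)) (hu_mono : ∀ n, Monotone (u n))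
    (hu_le_one : ∀ n z, u n z ≤ 1) {δ : ℕ → ℝ≥0∞} (hδ : Tendsto δ atTop (𝓝 0))
    (h_sub : ∀ n z, u n z ≤ ∫⁻ y, u n y ∂P z + δ n)
    (h_super : ∀ n z, ∫⁻ y, u n y ∂P z ≤ u n z + δ n) :
    Tendsto (fun n => u n x - u n y) atTop (𝓝 0) := by
  let c (n : ℕ) : ℝ≥0∞ := ⨆ a ∈ A, u n a
  have hc_le_one (n : ℕ) : c n ≤ 1 := iSup₂_le fun a _ => hu_le_one n a
  have h_above : Tendsto (fun n => u n x - c n) atTop (𝓝 0) := by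
    refine hx.tendsto_zero hA (w := fun n z => u n z - c n)
      (fun n => (hu n).sub measurable_const) (fun n z => tsub_le_self.trans (hu_le_one n z))
      (fun n a ha => tsub_eq_zero_of_le (le_iSup₂ (f := fun a _ => u n a) a ha)) hδ fun n z => ?_
    calc u n z - c n ≤ (∫⁻ y, u n y ∂P z + δ n) - c n := tsub_le_tsub_right (h_sub n z) _
      _ ≤ (∫⁻ y, u n y ∂P z - ∫⁻ _, c n ∂P z) + δ n := by
        rw [lintegral_const, measure_univ, mul_one]
        exact add_tsub_le_tsub_add
      _ ≤ ∫⁻ y, (u n y - c n) ∂P z + δ n := by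
        gcongr
        exact lintegral_sub_le _ _ measurable_const
  have h_below : Tendsto (fun n => c n - u n y) atTop (𝓝 0) := by
    refine hy.tendsto_zero hB (w := fun n z => c n - u n z)
      (fun n => measurable_const.sub (hu n)) (fun n z => tsub_le_self.trans (hc_le_one n))
      (fun n b hb => tsub_eq_zero_of_le (iSup₂_le fun a ha => hu_mono n (hAB a ha b hb)))
      hδ fun n z => ?_
    calc c n - u n z ≤ (c n - ∫⁻ y, u n y ∂P z) + (∫⁻ y, u n y ∂P z - u n z) :=
          tsub_le_tsub_add_tsub
      _ ≤ (∫⁻ _, c n ∂P z - ∫⁻ y, u n y ∂P z) + δ n := by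
        gcongr
        · simp
        · exact tsub_le_iff_left.2 (h_super n z)
      _ ≤ ∫⁻ y, (c n - u n y) ∂P z + δ n := by
        gcongr
        exact lintegral_sub_le _ _ (hu n)
  exact tendsto_of_tendsto_of_tendsto_of_le_of_le tendsto_const_nhds
    (by simpa using h_above.add h_below) (fun _ => zero_le) fun n => tsub_le_tsub_add_tsub

end MarkovChain

section CesaroMean

variable {E : Type*} [MeasurableSpace E] {P : Kernel E E}

instance isMarkovKernel_pow [IsMarkovKernel P] (n : ℕ) : IsMarkovKernel (P ^ n) := by
  induction n with
  | zero => exact inferInstanceAs (IsMarkovKernel Kernel.id)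
  | succ n ih => exact inferInstanceAs (IsMarkovKernel ((P ^ n) ∘ₖ P))

theorem invariant_pow {π : Measure E} (h : Kernel.Invariant P π) (n : ℕ) :
    Kernel.Invariant (P ^ n) π := by
  induction n with
  | zero => exact Measure.bind_dirac
  | succ n ih => exact ih.comp h

theorem kernel_pow_succ_apply_eq_lintegral (P : Kernel E E) (n : ℕ) (x : E) {J : Set E}
    (hJ : MeasurableSet J) : (P ^ (n + 1)) x J = ∫⁻ y, (P ^ n) y J ∂P x := by
  rw [add_comm, Kernel.pow_add_apply_eq_lintegral _ _ _ _ hJ, pow_one]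

theorem MonotoneKernel.monotone_lintegral [Preorder E] [IsMarkovKernel P] (hP : MonotoneKernel P)
    {u : E → ℝ≥0∞} (hu : Measurable u) (hu_mono : Monotone u) (hu_le_one : ∀ x, u x ≤ 1) :
    Monotone fun x => ∫⁻ y, u y ∂P x := by
  have hu_lt_top (x : E) : u x < ∞ := (hu_le_one x).trans_lt ENNReal.one_lt_top
  have h_ne_top (x : E) : ∫⁻ y, u y ∂P x ≠ ∞ :=
    ((lintegral_mono hu_le_one).trans_lt (by simp)).ne
  have h_toReal (x : E) : ∫ y, (u y).toReal ∂P x = (∫⁻ y, u y ∂P x).toReal :=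
    integral_toReal hu.aemeasurable (ae_of_all _ hu_lt_top)
  have h_mono := hP (fun y => (u y).toReal) hu.ennreal_toReal
    (fun x y hxy => ENNReal.toReal_mono (hu_lt_top y).ne (hu_mono hxy))
    fun x => ⟨ENNReal.toReal_nonneg,
      ENNReal.toReal_le_of_le_ofReal zero_le_one (ENNReal.ofReal_one.symm ▸ hu_le_one x)⟩
  intro x y hxy
  simpa only [h_toReal, ENNReal.toReal_le_toReal (h_ne_top x) (h_ne_top y)] using h_mono hxy

theorem MonotoneKernel.monotone_pow_apply [Preorder E] [IsMarkovKernel P] (hP : MonotoneKernel P)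
    {J : Set E} (hJ : MeasurableSet J) (hJ_upper : IsUpperSet J) (n : ℕ) :
    Monotone fun x => (P ^ n) x J := by
  induction n with
  | zero =>
    intro x y hxy
    rw [pow_zero]
    change Kernel.id x J ≤ Kernel.id y J
    rw [Kernel.id_apply, Kernel.id_apply, Measure.dirac_apply' _ hJ, Measure.dirac_apply' _ hJ]
    by_cases hx : x ∈ J
    · simp [hx, hJ_upper hxy hx]
    · simp [hx]
  | succ n ih =>
    simp only [kernel_pow_succ_apply_eq_lintegral _ _ _ hJ]
    exact hP.monotone_lintegral (Kernel.measurable_coe _ hJ) ih fun _ => prob_le_one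

/-- The expected fraction of time up to `n` that the chain started at `x` spends in `J`. -/
noncomputable def cesaroMean (P : Kernel E E) (J : Set E) (n : ℕ) (x : E) : ℝ≥0∞ :=
  ((n : ℝ≥0∞) + 1)⁻¹ * ∑ k ∈ Finset.range (n + 1), (P ^ k) x J

variable {J : Set E}

theorem measurable_cesaroMean (hJ : MeasurableSet J) (n : ℕ) : Measurable (cesaroMean P J n) :=
  (Finset.measurable_fun_sum _ fun k _ => Kernel.measurable_coe (P ^ k) hJ).const_mul _

theorem cesaroMean_le_one [IsMarkovKernel P] (n : ℕ) (x : E) : cesaroMean P J n x ≤ 1 := by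
  have h_sum : ∑ k ∈ Finset.range (n + 1), (P ^ k) x J ≤ n + 1 := calc
    _ ≤ ∑ _k ∈ Finset.range (n + 1), 1 := Finset.sum_le_sum fun _ _ => prob_le_one
    _ = n + 1 := by simp
  exact (mul_le_mul_right h_sum _).trans (ENNReal.inv_mul_le_one _)

theorem MonotoneKernel.monotone_cesaroMean [Preorder E] [IsMarkovKernel P] (hP : MonotoneKernel P)
    (hJ : MeasurableSet J) (hJ_upper : IsUpperSet J) (n : ℕ) : Monotone (cesaroMean P J n) := by
  intro x y hxy
  exact mul_le_mul_right
    (Finset.sum_le_sum fun k _ => hP.monotone_pow_apply hJ hJ_upper k hxy) _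

theorem lintegral_cesaroMean (hJ : MeasurableSet J) (n : ℕ) (μ : Measure E) :
    ∫⁻ x, cesaroMean P J n x ∂μ =
      ((n : ℝ≥0∞) + 1)⁻¹ * ∑ k ∈ Finset.range (n + 1), ∫⁻ x, (P ^ k) x J ∂μ := by
  unfold cesaroMean
  rw [lintegral_const_mul _ (Finset.measurable_fun_sum _ fun k _ => Kernel.measurable_coe _ hJ),
    lintegral_finsetSum _ fun k _ => Kernel.measurable_coe _ hJ]

theorem lintegral_kernel_cesaroMean (hJ : MeasurableSet J) (n : ℕ) (x : E) :
    ∫⁻ y, cesaroMean P J n y ∂P x =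
      ((n : ℝ≥0∞) + 1)⁻¹ * ∑ k ∈ Finset.range (n + 1), (P ^ (k + 1)) x J := by
  simp only [lintegral_cesaroMean hJ, kernel_pow_succ_apply_eq_lintegral _ _ _ hJ]

theorem lintegral_kernel_cesaroMean_add (hJ : MeasurableSet J) (n : ℕ) (x : E) :
    ∫⁻ y, cesaroMean P J n y ∂P x + ((n : ℝ≥0∞) + 1)⁻¹ * (P ^ 0) x J =
      cesaroMean P J n x + ((n : ℝ≥0∞) + 1)⁻¹ * (P ^ (n + 1)) x J := by
  rw [lintegral_kernel_cesaroMean hJ, cesaroMean, ← mul_add, ← mul_add, ← Finset.sum_range_succ,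
    Finset.sum_range_succ' _ (n + 1)]

theorem cesaroMean_le_lintegral_kernel_add [IsMarkovKernel P] (hJ : MeasurableSet J) (n : ℕ)
    (x : E) : cesaroMean P J n x ≤ ∫⁻ y, cesaroMean P J n y ∂P x + ((n : ℝ≥0∞) + 1)⁻¹ := by
  calc cesaroMean P J n x
      ≤ cesaroMean P J n x + ((n : ℝ≥0∞) + 1)⁻¹ * (P ^ (n + 1)) x J := le_self_add
    _ = ∫⁻ y, cesaroMean P J n y ∂P x + ((n : ℝ≥0∞) + 1)⁻¹ * (P ^ 0) x J :=
        (lintegral_kernel_cesaroMean_add hJ n x).symm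
    _ ≤ ∫⁻ y, cesaroMean P J n y ∂P x + ((n : ℝ≥0∞) + 1)⁻¹ := by
        gcongr
        exact mul_le_of_le_one_right' prob_le_one

theorem lintegral_kernel_cesaroMean_le_add [IsMarkovKernel P] (hJ : MeasurableSet J) (n : ℕ)
    (x : E) : ∫⁻ y, cesaroMean P J n y ∂P x ≤ cesaroMean P J n x + ((n : ℝ≥0∞) + 1)⁻¹ := by
  calc ∫⁻ y, cesaroMean P J n y ∂P x
      ≤ ∫⁻ y, cesaroMean P J n y ∂P x + ((n : ℝ≥0∞) + 1)⁻¹ * (P ^ 0) x J := le_self_add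
    _ = cesaroMean P J n x + ((n : ℝ≥0∞) + 1)⁻¹ * (P ^ (n + 1)) x J :=
        lintegral_kernel_cesaroMean_add hJ n x
    _ ≤ cesaroMean P J n x + ((n : ℝ≥0∞) + 1)⁻¹ := by
        gcongr
        exact mul_le_of_le_one_right' prob_le_one

theorem lintegral_cesaroMean_of_invariant {π : Measure E} (hπ : Kernel.Invariant P π)
    (hJ : MeasurableSet J) (n : ℕ) : ∫⁻ x, cesaroMean P J n x ∂π = π J := by
  have h_apply (k : ℕ) : ∫⁻ x, (P ^ k) x J ∂π = π J := by
    rw [← Measure.bind_apply hJ (Kernel.aemeasurable _)]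
    exact congrArg (· J) (invariant_pow hπ k)
  simp only [lintegral_cesaroMean hJ, h_apply, Finset.sum_const, Finset.card_range, nsmul_eq_mul]
  push_cast
  rw [← mul_assoc, ENNReal.inv_mul_cancel (by simp) (by finiteness), one_mul]

end CesaroMean

section StochDom

variable {E : Type*} [MeasurableSpace E]

theorem lintegral_sub_lintegral_le_lintegral_prod {F : Type*} [MeasurableSpace F] {μ : Measure E}
    {ν : Measure F} [IsProbabilityMeasure μ] [IsProbabilityMeasure ν] {f : E → ℝ≥0∞}
    {g : F → ℝ≥0∞} (hf : Measurable f) (hg : Measurable g) :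
    ∫⁻ x, f x ∂μ - ∫⁻ y, g y ∂ν ≤ ∫⁻ p, (f p.1 - g p.2) ∂μ.prod ν := by
  rw [← (measurePreserving_fst (μ := μ) (ν := ν)).lintegral_comp hf,
    ← (measurePreserving_snd (μ := μ) (ν := ν)).lintegral_comp hg]
  exact lintegral_sub_le _ _ (hg.comp measurable_snd)

theorem stochDom_of_invariant [Preorder E] {P : Kernel E E} [IsMarkovKernel P]
    (hP : MonotoneKernel P)
    (h_hit : ∀ x y : E, ∃ A B : Set E, MeasurableSet A ∧ MeasurableSet B ∧
      (∀ a ∈ A, ∀ b ∈ B, a ≤ b) ∧ HitsAlmostSurely P x A ∧ HitsAlmostSurely P y B)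
    {π₁ π₂ : Measure E} [IsProbabilityMeasure π₁] [IsProbabilityMeasure π₂]
    (h₁ : Kernel.Invariant P π₁) (h₂ : Kernel.Invariant P π₂) : StochDom π₁ π₂ := by
  intro J hJ hJ_upper
  let u : ℕ → E → ℝ≥0∞ := cesaroMean P J
  have hu (n : ℕ) : Measurable (u n) := measurable_cesaroMean hJ n
  have h_error : Tendsto (fun n : ℕ => ((n : ℝ≥0∞) + 1)⁻¹) atTop (𝓝 0) := by
    exact_mod_cast (tendsto_add_atTop_iff_nat 1).2 ENNReal.tendsto_inv_nat_nhds_zero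
  have h_sub (p : E × E) : Tendsto (fun n => u n p.1 - u n p.2) atTop (𝓝 0) := by
    obtain ⟨A, B, hA, hB, hAB, hxA, hyB⟩ := h_hit p.1 p.2
    exact hxA.tendsto_sub hyB hA hB hAB hu (hP.monotone_cesaroMean hJ hJ_upper) cesaroMean_le_one
      h_error (cesaroMean_le_lintegral_kernel_add hJ) (lintegral_kernel_cesaroMean_le_add hJ)
  have h_lim : Tendsto (fun n => ∫⁻ p, (u n p.1 - u n p.2) ∂π₁.prod π₂) atTop (𝓝 0) := by
    simpa using tendsto_lintegral_of_dominated_convergence (μ := π₁.prod π₂) (f := 0) 1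
      (fun n => ((hu n).comp measurable_fst).sub ((hu n).comp measurable_snd))
      (fun n => ae_of_all _ fun p => tsub_le_self.trans (cesaroMean_le_one n p.1)) (by simp)
      (ae_of_all _ h_sub)
  have h_le (n : ℕ) : π₁ J - π₂ J ≤ ∫⁻ p, (u n p.1 - u n p.2) ∂π₁.prod π₂ := by
    have h_prod := lintegral_sub_lintegral_le_lintegral_prod (μ := π₁) (ν := π₂) (hu n) (hu n)
    rwa [lintegral_cesaroMean_of_invariant h₁ hJ, lintegral_cesaroMean_of_invariant h₂ hJ]
      at h_prod
  exact tsub_eq_zero_iff_le.1 (le_zero_iff.1 (ge_of_tendsto' h_lim h_le))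

end StochDom

/-- Theorem 5.1: if for all `x, y` there are Borel sets `A_{x,y} ⪯ B_{x,y}`
such that the chain from `x` hits `A_{x,y}` a.s. and the chain from `y` hits `B_{x,y}`
a.s., then the monotone kernel `P` possesses at most one stationary distribution. -/
theorem stmt16 {E : Type*} [MetricSpace E] [PolishSpace E] [MeasurableSpace E] [BorelSpace E]
    [PartialOrder E] [OrderClosedTopology E]
    (P : Kernel E E) [IsMarkovKernel P] (hmono : MonotoneKernel P)
    (h : ∀ x y : E, ∃ A B : Set E, MeasurableSet A ∧ MeasurableSet B ∧
      (∀ a ∈ A, ∀ b ∈ B, a ≤ b) ∧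
      (∃ (Ω : Type) (_ : MeasurableSpace Ω) (μ : Measure Ω) (X : ℕ → Ω → E),
        IsMChain P x μ X ∧ ∀ᵐ ω ∂μ, ∃ n, X n ω ∈ A) ∧
      (∃ (Ω : Type) (_ : MeasurableSpace Ω) (μ : Measure Ω) (X : ℕ → Ω → E),
        IsMChain P y μ X ∧ ∀ᵐ ω ∂μ, ∃ n, X n ω ∈ B)) :
    ∀ π₁ π₂ : Measure E, IsProbabilityMeasure π₁ → IsProbabilityMeasure π₂ →
      π₁.bind (fun a => P a) = π₁ → π₂.bind (fun a => P a) = π₂ → π₁ = π₂ := by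
  intro π₁ π₂ _ _ h₁ h₂
  exact (stochDom_of_invariant hmono h h₁ h₂).antisymm (stochDom_of_invariant hmono h h₂ h₁)
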